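/- Consequently, given θ defined by the compatible gradient system ∇_{u_X} θ = −∇_{v_X} H − ∇_{u_X} φ − cos γ ∇_{u_X} ψ and ∇_{v_X} θ = ∇_{u_X} H − ∇_{v_X} φ − cos γ ∇_{v_X} ψ, where ΔH = −K with K the Gauss-map curvature formula above, the mixed-derivative compatibility ∇_{u_X}∇_{v_X} θ − ∇_{v_X}∇_{u_X} θ = 0 holds, so on a simply connected domain θ exists and is unique up to an additive constant. -/

import Mathlib

/-!
With `K = sin γ (ψ_v γ_u - ψ_u γ_v)`, symmetry of second derivatives cancels the `φ` terms and the
`cos γ` terms of `∂_u ω₂ - ∂_v ω₁`, leaving `ΔH + K = 0`; so `ω` is closed.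

By the Poincaré lemma on convex sets, `ω` has a primitive on every ball contained in `Ω`. Two such
primitives differ by a constant where both are defined, so the germs of primitives form a covering
space of `Ω` with discrete fibre `ℝ` (`primitiveBundle`). As `Ω` is simply connected and locally
path connected, the identity of `Ω` lifts to a continuous section of this covering, and a section
is a global primitive (`exists_primitive_of_locally`). Uniqueness up to a constant holds because
a function with zero derivative on a connected open set is constant.
-/

open Real

/-- Directional derivative along the coordinate direction u_X = (1,0). -/
noncomputable def Du (f : ℝ × ℝ → ℝ) (p : ℝ × ℝ) : ℝ := fderiv ℝ f p (1, 0)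

/-- Directional derivative along the coordinate direction v_X = (0,1). -/
noncomputable def Dv (f : ℝ × ℝ → ℝ) (p : ℝ × ℝ) : ℝ := fderiv ℝ f p (0, 1)

/-- The real line with the discrete topology: the fibre of the covering space of local
primitives. -/
def DiscreteReal : Type := ℝ

instance : TopologicalSpace DiscreteReal := ⊥

instance : DiscreteTopology DiscreteReal := ⟨rfl⟩

/-- The covering space of germs of primitives of a 1-form `α` on `Ω`. Over the convex set `U i`,
on which `f i` is a primitive of `α`, the coordinate `v` stands for the germ of `f i + v`; two
local primitives differ by a constant on the convex set `U i ∩ U j`, so the transition maps are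
locally constant in the base point. -/
def primitiveBundle {E : Type*} [NormedAddCommGroup E] [NormedSpace ℝ E]
    {Ω : Set E} (α : E → E →L[ℝ] ℝ) (U : Ω → Set E) (hUo : ∀ i, IsOpen (U i))
    (hUc : ∀ i, Convex ℝ (U i)) (hpU : ∀ i : Ω, (i : E) ∈ U i) (f : Ω → E → ℝ)
    (hf : ∀ i, ∀ x ∈ U i, HasFDerivAt (f i) (α x) x) :
    FiberBundleCore Ω Ω DiscreteReal where
  baseSet i := Subtype.val ⁻¹' U i
  isOpen_baseSet i := (hUo i).preimage continuous_subtype_val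
  indexAt x := x
  mem_baseSet_at x := hpU x
  coordChange i j x v := (show ℝ from v) + (f i x - f j x)
  coordChange_self i x _ v := by
    change (show ℝ from v) + (f i x - f i x) = v
    rw [sub_self]
    exact add_zero (show ℝ from v)
  continuousOn_coordChange i j := by
    obtain ⟨c, hc⟩ := ((hUo i).inter (hUo j)).exists_eq_add_of_fderiv_eq (𝕜 := ℝ)
      ((hUc i).inter (hUc j)).isPreconnected
      (fun x hx => (hf i x hx.1).differentiableAt.differentiableWithinAt)
      (fun x hx => (hf j x hx.2).differentiableAt.differentiableWithinAt)
      (fun x hx => (hf i x hx.1).fderiv.trans (hf j x hx.2).fderiv.symm)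
    have hcont : Continuous fun p : Ω × DiscreteReal =>
        (show DiscreteReal from (show ℝ from p.2) + c) :=
      (continuous_of_discreteTopology (f := fun v : DiscreteReal =>
        (show DiscreteReal from (show ℝ from v) + c))).comp continuous_snd
    refine hcont.continuousOn.congr fun p hp => ?_
    have h := hc (x := (p.1 : E)) hp.1
    change (show ℝ from p.2) + (f i p.1 - f j p.1) = (show ℝ from p.2) + c
    rw [h]
    simp
  coordChange_comp i j k x _ v := by
    change (show ℝ from v) + (f i x - f j x) + (f j x - f k x) = (show ℝ from v) + (f i x - f k x)
    ring

open Topology in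
/-- A 1-form `α` that has a primitive near every point of a simply connected open set `Ω` has a
primitive on `Ω`: the local primitives form a covering space of `Ω`, which has a global section. -/
theorem exists_primitive_of_locally {E : Type*} [NormedAddCommGroup E] [NormedSpace ℝ E]
    {Ω : Set E} (hΩ : IsOpen Ω) [SimplyConnectedSpace Ω] (α : E → E →L[ℝ] ℝ)
    (hloc : ∀ p ∈ Ω, ∃ U : Set E, IsOpen U ∧ Convex ℝ U ∧ p ∈ U ∧
      ∃ f : E → ℝ, ∀ x ∈ U, HasFDerivAt f (α x) x) :
    ∃ θ : E → ℝ, ∀ x ∈ Ω, HasFDerivAt θ (α x) x := by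
  classical
  choose U hUo hUc hpU f hf using fun p : Ω => hloc p p.2
  let Z := primitiveBundle α U hUo hUc hpU f hf
  have hcov : IsCoveringMap (Bundle.TotalSpace.proj : Z.TotalSpace → Ω) :=
    FiberBundle.isCoveringMap (F := DiscreteReal)
  have : LocallyPathConnectedSpace Ω := hΩ.locallyPathConnectedSpace
  obtain ⟨p₀⟩ : Nonempty Ω := inferInstance
  obtain ⟨s, ⟨-, hs⟩, -⟩ := hcov.existsUnique_continuousMap_lifts (ContinuousMap.id Ω) p₀
    ⟨p₀, (0 : ℝ)⟩ rfl
  have hs1 : ∀ x, (s x).proj = x := fun x => congrFun hs x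
  let v : Ω → ℝ := fun x => (s x).2
  refine ⟨fun x => if h : x ∈ Ω then v ⟨x, h⟩ + f ⟨x, h⟩ x else 0, fun p hp => ?_⟩
  let i : Ω := ⟨p, hp⟩
  -- Read in the chart at `p`, the section is a continuous map to a discrete space.
  have hcont : ContinuousAt (fun x => (Z.localTriv i (s x)).2) i := by
    have h1 : ContinuousAt (Z.localTriv i) (s i) := by
      refine (Z.localTriv i).toOpenPartialHomeomorph.continuousAt ?_
      change (s i).proj ∈ Subtype.val ⁻¹' U i
      rw [hs1]
      exact hpU i
    exact (continuous_snd.continuousAt.comp h1).comp s.continuous.continuousAt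
  have hg : ∀ x : Ω, (Z.localTriv i (s x)).2 = v x + (f x x - f i x) := fun x => by
    change v x + (f (s x).proj (s x).proj - f i (s x).proj) = _
    rw [hs1]
  have hev : ∀ᶠ x in 𝓝 i, v x + (f x x - f i x) = v i := by
    have h2 := hcont.eventually
      (IsOpen.mem_nhds (isOpen_discrete {(Z.localTriv i (s i)).2}) rfl)
    filter_upwards [h2] with x hx
    have h3 : (Z.localTriv i (s x)).2 = (Z.localTriv i (s i)).2 := hx
    rw [hg, hg, sub_self] at h3
    exact h3.trans (add_zero (v i))
  have hev' : ∀ᶠ x in 𝓝 p, ∃ h : x ∈ Ω, v ⟨x, h⟩ + (f ⟨x, h⟩ x - f i x) = v i := by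
    rw [← map_nhds_subtype_coe_eq_nhds hp (hΩ.mem_nhds hp), Filter.eventually_map]
    filter_upwards [hev] with x hx using ⟨x.2, hx⟩
  refine ((hf i p (hpU i)).add_const (v i)).congr_of_eventuallyEq ?_
  filter_upwards [hev'] with x ⟨h, hx⟩
  rw [dif_pos h, ← hx]
  ring

/-- A closed 1-form on a simply connected open set is exact. -/
theorem exists_primitive_of_closed {E : Type*} [NormedAddCommGroup E] [NormedSpace ℝ E]
    {Ω : Set E} (hΩ : IsOpen Ω) [SimplyConnectedSpace Ω] (α : E → E →L[ℝ] ℝ)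
    (hα : DifferentiableOn ℝ α Ω)
    (hdα : ∀ a ∈ Ω, ∀ x y, fderiv ℝ α a x y = fderiv ℝ α a y x) :
    ∃ θ : E → ℝ, ∀ x ∈ Ω, HasFDerivAt θ (α x) x := by
  refine exists_primitive_of_locally hΩ α fun p hp => ?_
  obtain ⟨r, hr, hball⟩ := Metric.isOpen_iff.1 hΩ p hp
  exact ⟨Metric.ball p r, Metric.isOpen_ball, convex_ball p r, Metric.mem_ball_self hr,
    (convex_ball p r).exists_forall_hasFDerivAt_of_fderiv_symmetric Metric.isOpen_ball
      (hα.mono hball) fun a ha => hdα a (hball ha)⟩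

/-- A linear form on the plane is determined by its values on the two coordinate directions. -/
theorem fderiv_eq_of_Du_Dv {f g : ℝ × ℝ → ℝ} {p : ℝ × ℝ} (hu : Du f p = Du g p)
    (hv : Dv f p = Dv g p) : fderiv ℝ f p = fderiv ℝ g p := by
  ext
  · simpa [Du] using hu
  · simpa [Dv] using hv

theorem contDiffAt_fderiv_apply {f : ℝ × ℝ → ℝ} {p : ℝ × ℝ} (hf : ContDiffAt ℝ (⊤ : ℕ∞) f p)
    (w : ℝ × ℝ) : ContDiffAt ℝ (⊤ : ℕ∞) (fun q => fderiv ℝ f q w) p :=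
  (hf.fderiv_right (m := (⊤ : ℕ∞)) (by simp)).clm_apply contDiffAt_const

theorem Du_Dv_comm {f : ℝ × ℝ → ℝ} {p : ℝ × ℝ} (hf : ContDiffAt ℝ (⊤ : ℕ∞) f p) :
    Du (Dv f) p = Dv (Du f) p := by
  have hd : DifferentiableAt ℝ (fderiv ℝ f) p :=
    (hf.fderiv_right (m := (⊤ : ℕ∞)) (by simp)).differentiableAt (by simp)
  have key : ∀ w z : ℝ × ℝ, fderiv ℝ (fun q => fderiv ℝ f q w) p z
      = fderiv ℝ (fderiv ℝ f) p z w := fun w z => by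
    rw [fderiv_clm_apply hd (differentiableAt_const w)]
    simp
  have hsymm : IsSymmSndFDerivAt ℝ f p := hf.isSymmSndFDerivAt (by
    simp only [minSmoothness_of_isRCLikeNormedField]
    exact WithTop.coe_le_coe.2 (le_top : (2 : ℕ∞) ≤ ⊤))
  exact (key _ _).trans ((hsymm.eq _ _).trans (key _ _).symm)

/-- on a simply connected open Ω ⊆ ℝ², if ΔH = −K with
K = sin γ (∇_{v_X}ψ ∇_{u_X}γ − ∇_{u_X}ψ ∇_{v_X}γ), then the 1-form ω with
ω(u_X) = −∇_{v_X}H − ∇_{u_X}φ − cos γ ∇_{u_X}ψ and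
ω(v_X) = ∇_{u_X}H − ∇_{v_X}φ − cos γ ∇_{v_X}ψ is closed, hence exact on Ω:
a primitive θ exists, and it is unique up to an additive constant. -/
theorem stmt11 (Ω : Set (ℝ × ℝ)) (hΩ : IsOpen Ω) (hsc : SimplyConnectedSpace ↥Ω)
    (H φ ψ γ : ℝ × ℝ → ℝ)
    (hH : ContDiffOn ℝ (⊤ : ℕ∞) H Ω) (hφ : ContDiffOn ℝ (⊤ : ℕ∞) φ Ω)
    (hψ : ContDiffOn ℝ (⊤ : ℕ∞) ψ Ω) (hγ : ContDiffOn ℝ (⊤ : ℕ∞) γ Ω)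
    (hPDE : ∀ p ∈ Ω, Du (Du H) p + Dv (Dv H) p =
      -(Real.sin (γ p) * (Dv ψ p * Du γ p - Du ψ p * Dv γ p)))
    (ω₁ ω₂ : ℝ × ℝ → ℝ)
    (hω₁ : ∀ p, ω₁ p = -Dv H p - Du φ p - Real.cos (γ p) * Du ψ p)
    (hω₂ : ∀ p, ω₂ p = Du H p - Dv φ p - Real.cos (γ p) * Dv ψ p) :
    (∀ p ∈ Ω, Du ω₂ p - Dv ω₁ p = 0) ∧
    (∃ θ : ℝ × ℝ → ℝ, DifferentiableOn ℝ θ Ω ∧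
      ∀ p ∈ Ω, Du θ p = ω₁ p ∧ Dv θ p = ω₂ p) ∧
    (∀ θ₁ θ₂ : ℝ × ℝ → ℝ, DifferentiableOn ℝ θ₁ Ω → DifferentiableOn ℝ θ₂ Ω →
      (∀ p ∈ Ω, Du θ₁ p = ω₁ p ∧ Dv θ₁ p = ω₂ p) →
      (∀ p ∈ Ω, Du θ₂ p = ω₁ p ∧ Dv θ₂ p = ω₂ p) →
      ∃ c : ℝ, ∀ p ∈ Ω, θ₁ p = θ₂ p + c) := by
  have hat : ∀ {f : ℝ × ℝ → ℝ}, ContDiffOn ℝ (⊤ : ℕ∞) f Ω → ∀ p ∈ Ω, ContDiffAt ℝ (⊤ : ℕ∞) f p :=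
    fun hf p hp => hf.contDiffAt (hΩ.mem_nhds hp)
  have hdiff : ∀ {f : ℝ × ℝ → ℝ}, ContDiffOn ℝ (⊤ : ℕ∞) f Ω → ∀ p ∈ Ω,
      DifferentiableAt ℝ f p ∧ DifferentiableAt ℝ (Du f) p ∧ DifferentiableAt ℝ (Dv f) p :=
    fun hf p hp => ⟨(hat hf p hp).differentiableAt (by simp),
      (contDiffAt_fderiv_apply (hat hf p hp) (1, 0)).differentiableAt (by simp),
      (contDiffAt_fderiv_apply (hat hf p hp) (0, 1)).differentiableAt (by simp)⟩
  have h1 : ∀ p ∈ Ω, HasFDerivAt ω₁ (-fderiv ℝ (Dv H) p - fderiv ℝ (Du φ) p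
      - (Real.cos (γ p) • fderiv ℝ (Du ψ) p
        + Du ψ p • (-Real.sin (γ p) • fderiv ℝ γ p))) p := fun p hp => by
    rw [funext hω₁]
    exact ((hdiff hH p hp).2.2.hasFDerivAt.neg.sub (hdiff hφ p hp).2.1.hasFDerivAt).sub
      ((hdiff hγ p hp).1.hasFDerivAt.cos.mul (hdiff hψ p hp).2.1.hasFDerivAt)
  have h2 : ∀ p ∈ Ω, HasFDerivAt ω₂ (fderiv ℝ (Du H) p - fderiv ℝ (Dv φ) p
      - (Real.cos (γ p) • fderiv ℝ (Dv ψ) p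
        + Dv ψ p • (-Real.sin (γ p) • fderiv ℝ γ p))) p := fun p hp => by
    rw [funext hω₂]
    exact ((hdiff hH p hp).2.1.hasFDerivAt.sub (hdiff hφ p hp).2.2.hasFDerivAt).sub
      ((hdiff hγ p hp).1.hasFDerivAt.cos.mul (hdiff hψ p hp).2.2.hasFDerivAt)
  have hclosed : ∀ p ∈ Ω, Du ω₂ p - Dv ω₁ p = 0 := fun p hp => by
    have e1 : Dv ω₁ p = -Dv (Dv H) p - Dv (Du φ) p - (Real.cos (γ p) * Dv (Du ψ) p
        + Du ψ p * (-Real.sin (γ p) * Dv γ p)) := by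
      rw [Dv, (h1 p hp).fderiv]; rfl
    have e2 : Du ω₂ p = Du (Du H) p - Du (Dv φ) p - (Real.cos (γ p) * Du (Dv ψ) p
        + Dv ψ p * (-Real.sin (γ p) * Du γ p)) := by
      rw [Du, (h2 p hp).fderiv]; rfl
    rw [e1, e2, Du_Dv_comm (hat hφ p hp), Du_Dv_comm (hat hψ p hp)]
    linear_combination hPDE p hp
  refine ⟨hclosed, ?_, ?_⟩
  · let α : ℝ × ℝ → ℝ × ℝ →L[ℝ] ℝ := fun p =>
      ω₁ p • ContinuousLinearMap.fst ℝ ℝ ℝ + ω₂ p • ContinuousLinearMap.snd ℝ ℝ ℝ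
    have hα : ∀ p ∈ Ω, HasFDerivAt α
        ((fderiv ℝ ω₁ p).smulRight (ContinuousLinearMap.fst ℝ ℝ ℝ)
          + (fderiv ℝ ω₂ p).smulRight (ContinuousLinearMap.snd ℝ ℝ ℝ)) p := fun p hp => by
      have k1 := (h1 p hp).differentiableAt.hasFDerivAt.smul_const (ContinuousLinearMap.fst ℝ ℝ ℝ)
      have k2 := (h2 p hp).differentiableAt.hasFDerivAt.smul_const (ContinuousLinearMap.snd ℝ ℝ ℝ)
      exact k1.add k2
    obtain ⟨θ, hθ⟩ := exists_primitive_of_closed hΩ α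
      (fun p hp => (hα p hp).differentiableAt.differentiableWithinAt) (fun p hp x y => by
        have hsplit : ∀ (L : ℝ × ℝ →L[ℝ] ℝ) (z : ℝ × ℝ),
            L z = z.1 * L (1, 0) + z.2 * L (0, 1) := fun L z => by
          rw [← smul_eq_mul, ← smul_eq_mul, ← map_smul, ← map_smul, ← map_add]
          simp
        have hc := hclosed p hp
        simp only [Du, Dv] at hc
        rw [(hα p hp).fderiv]
        simp only [add_apply, ContinuousLinearMap.smulRight_apply,
          smul_apply, ContinuousLinearMap.coe_fst',
          ContinuousLinearMap.coe_snd', smul_eq_mul]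
        rw [hsplit (fderiv ℝ ω₁ p) x, hsplit (fderiv ℝ ω₁ p) y, hsplit (fderiv ℝ ω₂ p) x,
          hsplit (fderiv ℝ ω₂ p) y]
        linear_combination (x.1 * y.2 - x.2 * y.1) * hc)
    refine ⟨θ, fun p hp => (hθ p hp).differentiableAt.differentiableWithinAt, fun p hp => ?_⟩
    rw [Du, Dv, (hθ p hp).fderiv]
    simp [α]
  · intro θ₁ θ₂ hd₁ hd₂ hθ₁ hθ₂
    have hpre : IsPreconnected Ω := isPreconnected_iff_preconnectedSpace.2 inferInstance
    exact hΩ.exists_eq_add_of_fderiv_eq hpre hd₁ hd₂ fun p hp =>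
      fderiv_eq_of_Du_Dv ((hθ₁ p hp).1.trans (hθ₂ p hp).1.symm)
        ((hθ₁ p hp).2.trans (hθ₂ p hp).2.symm)
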